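/- Let d ≥ 1 and p, q ∈ (1,∞). Then there is a constant N = N(d) such that for every u ∈ C₀^∞(ℝ^{1+d}) and every λ > 0, ‖Du‖_{𝕃_{q,p}} ≤ N λ^{−1/2} ‖∂_t u + Δu − λ u‖_{𝕃_{q,p}}. -/

import Mathlib

open MeasureTheory Metric Set
open scoped ENNReal NNReal

noncomputable section

abbrev Spc (d : ℕ) : Type := EuclideanSpace ℝ (Fin d)

abbrev Pt (d : ℕ) : Type := ℝ × Spc d

instance matrixMeasurableSpace (d : ℕ) : MeasurableSpace (Matrix (Fin d) (Fin d) ℝ) :=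
  (inferInstance : MeasurableSpace (Fin d → Fin d → ℝ))

/-- Membership in `𝕊_δ`: symmetric `d×d` matrices with
`δ|ξ|² ≤ (aξ,ξ) ≤ δ⁻¹|ξ|²`. -/
def inS (d : ℕ) (δ : ℝ) (a : Matrix (Fin d) (Fin d) ℝ) : Prop :=
  a.IsSymm ∧ ∀ ξ : Fin d → ℝ,
    δ * (∑ i, ξ i ^ 2) ≤ (∑ i, ∑ j, a i j * ξ i * ξ j) ∧
    (∑ i, ∑ j, a i j * ξ i * ξ j) ≤ δ⁻¹ * (∑ i, ξ i ^ 2)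

/-- `{a,u} = a^{ij} a^{kr} u_{ik} u_{jr}`. -/
def bra (d : ℕ) (a u : Matrix (Fin d) (Fin d) ℝ) : ℝ :=
  ∑ i, ∑ j, ∑ k, ∑ r, a i j * a k r * u i k * u j r

/-- Frobenius norm of a `d×d` array. -/
def mnorm {d : ℕ} (m : Fin d → Fin d → ℝ) : ℝ :=
  Real.sqrt (∑ i, ∑ j, m i j ^ 2)

/-- Euclidean norm of a vector given as `Fin d → ℝ`. -/
def vnorm {d : ℕ} (v : Fin d → ℝ) : ℝ :=
  Real.sqrt (∑ i, v i ^ 2)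

/-- Parabolic cylinder `C_R(t,x) = (t, t+R²) × B_R(x)`. -/
def cyl (d : ℕ) (R t : ℝ) (x : Spc d) : Set (Pt d) :=
  Ioo t (t + R ^ 2) ×ˢ ball x R

/-- Time derivative `∂_t u`. -/
def Dt {d : ℕ} (u : Pt d → ℝ) (z : Pt d) : ℝ :=
  deriv (fun s => u (s, z.2)) z.1

/-- Spatial derivative `D_i u`. -/
def Dx {d : ℕ} (i : Fin d) (u : Pt d → ℝ) (z : Pt d) : ℝ :=
  fderiv ℝ (fun y => u (z.1, y)) z.2 (EuclideanSpace.single i 1)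

/-- Second spatial derivative `D_{ij} u = D_i D_j u`. -/
def Dxx {d : ℕ} (i j : Fin d) (u : Pt d → ℝ) : Pt d → ℝ :=
  Dx i (Dx j u)

/-- `u ∈ C₀^∞(ℝ^{1+d})`. -/
def CinfC {d : ℕ} (u : Pt d → ℝ) : Prop :=
  ContDiff ℝ (⊤ : ℕ∞) u ∧ HasCompactSupport u

/-- The kernel `p_{α,k}(s,r)`. -/
def pak (d : ℕ) (α k s r : ℝ) : ℝ :=
  if 0 < s then s ^ (-((d : ℝ) + 2 - α) / 2) * Real.exp (-(r ^ 2) / (k * s)) else 0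

/-- Parabolic distance to the origin `ρ(t,x) = |x| + √|t|`. -/
def prho {d : ℕ} (z : Pt d) : ℝ := ‖z.2‖ + Real.sqrt |z.1|

/-- Average of (the positive part of) `g` over `C`, valued in `ℝ≥0∞`. -/
def aveLin {d : ℕ} (C : Set (Pt d)) (g : Pt d → ℝ) : ℝ≥0∞ :=
  (volume C)⁻¹ * ∫⁻ z in C, ENNReal.ofReal (g z)

/-- Parabolic maximal function `𝕄_β g` (for `g ≥ 0`). -/
def maxF {d : ℕ} (β : ℝ) (g : Pt d → ℝ) (z : Pt d) : ℝ≥0∞ :=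
  ⨆ (ρ : ℝ) (_ : 0 < ρ) (t : ℝ) (x : Spc d) (_ : z ∈ cyl d ρ t x),
    ENNReal.ofReal (ρ ^ β) * aveLin (cyl d ρ t x) g

/-- Oscillation of a matrix-valued function over `C`. -/
def oscC {d : ℕ} (C : Set (Pt d)) (g : Pt d → Fin d → Fin d → ℝ) : ℝ :=
  ⨍ z₁ in C, ⨍ z₂ in C, mnorm (fun i j => g z₁ i j - g z₂ i j)

/-- Mixed norm `‖f‖_{𝕃_{q,p}}` (inner integration in `t`, outer in `x`). -/
def mixedNorm {d : ℕ} (q p : ℝ) (f : Pt d → ℝ) : ℝ :=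
  (∫ x : Spc d, (∫ t : ℝ, |f (t, x)| ^ q) ^ (p / q)) ^ (1 / p)

/-- Mixed norm on a set `Γ`. -/
def mixedNormOn {d : ℕ} (q p : ℝ) (Γ : Set (Pt d)) (f : Pt d → ℝ) : ℝ :=
  mixedNorm q p (Γ.indicator f)

/-- Normalized (averaged) mixed norm over the cylinder `C_R(t,x)`, in `ℝ≥0∞`. -/
def cylNormL {d : ℕ} (q p R t : ℝ) (x : Spc d) (f : Pt d → ℝ) : ℝ≥0∞ :=
  ((volume (ball x R))⁻¹ * ∫⁻ y in ball x R,
      ((volume (Ioo t (t + R ^ 2)))⁻¹ * ∫⁻ s in Ioo t (t + R ^ 2),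
        ENNReal.ofReal |f (s, y)| ^ q) ^ (p / q)) ^ (1 / p)

/-- Mixed norm on a set, valued in `ℝ≥0∞`. -/
def mixedNormLe {d : ℕ} (q p : ℝ) (Γ : Set (Pt d)) (f : Pt d → ℝ) : ℝ≥0∞ :=
  (∫⁻ x : Spc d, (∫⁻ t : ℝ, ENNReal.ofReal |Γ.indicator f (t, x)| ^ q) ^ (p / q)) ^ (1 / p)

/-- `ã_C(t)`: average of `a(t,·)` over the ball of the cylinder. -/
def aTilde {d : ℕ} (a : Pt d → Matrix (Fin d) (Fin d) ℝ) (R : ℝ) (x₀ : Spc d) (t : ℝ)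
    (i j : Fin d) : ℝ :=
  ⨍ y in ball x₀ R, a (t, y) i j

/-- The mean oscillation of `a` w.r.t. `x` over one cylinder. -/
def aSharpCyl {d : ℕ} (a : Pt d → Matrix (Fin d) (Fin d) ℝ) (R t₀ : ℝ) (x₀ : Spc d) : ℝ≥0∞ :=
  (volume (cyl d R t₀ x₀))⁻¹ * ∫⁻ z in cyl d R t₀ x₀,
    ENNReal.ofReal (mnorm (fun i j => a z i j - aTilde a R x₀ z.1 i j))

/-- `a^♯`. -/
def aSharp {d : ℕ} (a : Pt d → Matrix (Fin d) (Fin d) ℝ) : ℝ≥0∞ :=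
  ⨆ (R : ℝ) (_ : 0 < R) (t₀ : ℝ) (x₀ : Spc d), aSharpCyl a R t₀ x₀

/-- `a^♯_ρ` (only cylinders of radius `≤ ρa`). -/
def aSharpRho {d : ℕ} (a : Pt d → Matrix (Fin d) (Fin d) ℝ) (ρa : ℝ) : ℝ≥0∞ :=
  ⨆ (R : ℝ) (_ : 0 < R) (_ : R ≤ ρa) (t₀ : ℝ) (x₀ : Spc d), aSharpCyl a R t₀ x₀

/-- Homogeneous Morrey norm `‖g‖_{Ė_{p,β}}`. -/
def morreyP {d : ℕ} (p β : ℝ) (g : Pt d → ℝ) : ℝ≥0∞ :=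
  ⨆ (ρ : ℝ) (_ : 0 < ρ) (t : ℝ) (x : Spc d),
    ENNReal.ofReal (ρ ^ β) *
      ((volume (cyl d ρ t x))⁻¹ * ∫⁻ z in cyl d ρ t x, ENNReal.ofReal |g z| ^ p) ^ (1 / p)

/-- Homogeneous mixed-norm Morrey norm `‖g‖_{Ė_{q,p,β}}`. -/
def morreyQP {d : ℕ} (q p β : ℝ) (g : Pt d → ℝ) : ℝ≥0∞ :=
  ⨆ (ρ : ℝ) (_ : 0 < ρ) (t : ℝ) (x : Spc d),
    ENNReal.ofReal (ρ ^ β) * cylNormL q p ρ t x g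

/-- Inhomogeneous mixed-norm Morrey norm `‖g‖_{E_{q,p,β}}` (radii `ρ ∈ (0,1]`). -/
def morreyI {d : ℕ} (q p β : ℝ) (g : Pt d → ℝ) : ℝ≥0∞ :=
  ⨆ (ρ : ℝ) (_ : 0 < ρ) (_ : ρ ≤ 1) (t : ℝ) (x : Spc d),
    ENNReal.ofReal (ρ ^ β) * cylNormL q p ρ t x g

/-- `b̄_{q',p',ρb}` for a vector field `b`. -/
def bBar {d : ℕ} (q' p' : ℝ) (b : Pt d → Fin d → ℝ) (ρb : ℝ) : ℝ≥0∞ :=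
  ⨆ (R : ℝ) (_ : 0 < R) (_ : R ≤ ρb) (t : ℝ) (x : Spc d),
    ENNReal.ofReal R * cylNormL q' p' R t x (fun z => vnorm (b z))

/-- Test function supported in the open set `Q`. -/
def IsTest {d : ℕ} (Q : Set (Pt d)) (φ : Pt d → ℝ) : Prop :=
  ContDiff ℝ (⊤ : ℕ∞) φ ∧ HasCompactSupport φ ∧ tsupport φ ⊆ Q

/-- `ut` is the weak time derivative of `u` on `Q`. -/
def WeakDtOn {d : ℕ} (Q : Set (Pt d)) (u ut : Pt d → ℝ) : Prop :=
  ∀ φ, IsTest Q φ → ∫ z in Q, u z * Dt φ z = - ∫ z in Q, ut z * φ z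

/-- `ui` is the weak `i`-th spatial derivative of `u` on `Q`. -/
def WeakDxOn {d : ℕ} (Q : Set (Pt d)) (i : Fin d) (u ui : Pt d → ℝ) : Prop :=
  ∀ φ, IsTest Q φ → ∫ z in Q, u z * Dx i φ z = - ∫ z in Q, ui z * φ z


lemma mink_aux {α Ω : Type*} [MeasurableSpace α] [MeasurableSpace Ω] (μ : Measure α) [SFinite μ]
    (ν : Measure Ω) [SFinite ν] (h : α → Ω → ℝ≥0∞) (hm : Measurable (Function.uncurry h))
    (q : ℝ) (hq : 1 < q) (b : Ω → ℝ≥0∞) (hb : Measurable b) (hb0 : ∀ ω, b ω ≠ 0)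
    (hbt : ∀ᵐ ω ∂ν, b ω ≠ ∞) (hab : ∀ ω, (∫⁻ y, h y ω ^ q ∂μ) ≤ b ω ^ q) :
    ∫⁻ y, (∫⁻ ω, h y ω ∂ν) ^ q ∂μ ≤ (∫⁻ ω, b ω ∂ν) ^ q := by
  have hq0 : 0 < q := by linarith
  have hmy : ∀ y, Measurable (h y) := fun y => hm.comp measurable_prodMk_left
  have h1 : ∀ y, (∫⁻ ω, h y ω ∂ν) ^ q ≤
      (∫⁻ ω, h y ω ^ q * b ω ^ (1 - q) ∂ν) * (∫⁻ ω, b ω ∂ν) ^ (q - 1) := by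
    intro y
    have e : ∫⁻ ω, h y ω ∂ν =
        ∫⁻ ω, (h y ω ^ q * b ω ^ (1 - q)) ^ (1 / q) * (b ω) ^ (1 - 1 / q) ∂ν := by
      apply lintegral_congr_ae
      filter_upwards [hbt] with ω hω
      rw [ENNReal.mul_rpow_of_nonneg _ _ (by positivity), ← ENNReal.rpow_mul, ← ENNReal.rpow_mul,
        mul_assoc, ← ENNReal.rpow_add _ _ (hb0 ω) hω]
      have e1 : q * (1 / q) = 1 := by field_simp
      have e2 : (1 - q) * (1 / q) + (1 - 1 / q) = 0 := by field_simp; ring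
      rw [e1, e2]; simp
    have hl := ENNReal.lintegral_mul_norm_pow_le (μ := ν)
      (f := fun ω => h y ω ^ q * b ω ^ (1 - q)) (g := b)
      (((hmy y).pow_const q).mul (hb.pow_const _)).aemeasurable hb.aemeasurable
      (p := 1 / q) (q := 1 - 1 / q) (by positivity)
      (by rw [sub_nonneg, div_le_one hq0]; exact hq.le) (by ring)
    rw [e]
    refine (ENNReal.rpow_le_rpow hl hq0.le).trans ?_
    rw [ENNReal.mul_rpow_of_nonneg _ _ hq0.le, ← ENNReal.rpow_mul, ← ENNReal.rpow_mul]
    have e1 : 1 / q * q = 1 := by field_simp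
    have e2 : (1 - 1 / q) * q = q - 1 := by field_simp
    rw [e1, e2, ENNReal.rpow_one]
  have hm2 : Measurable (Function.uncurry fun y ω => h y ω ^ q * b ω ^ (1 - q)) :=
    (hm.pow_const q).mul ((hb.comp measurable_snd).pow_const _)
  calc ∫⁻ y, (∫⁻ ω, h y ω ∂ν) ^ q ∂μ
      ≤ ∫⁻ y, (∫⁻ ω, h y ω ^ q * b ω ^ (1 - q) ∂ν) * (∫⁻ ω, b ω ∂ν) ^ (q - 1) ∂μ :=
        lintegral_mono h1
    _ = (∫⁻ y, (∫⁻ ω, h y ω ^ q * b ω ^ (1 - q) ∂ν) ∂μ) * (∫⁻ ω, b ω ∂ν) ^ (q - 1) := by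
        rw [lintegral_mul_const]
        exact hm2.lintegral_prod_right
    _ = (∫⁻ ω, (∫⁻ y, h y ω ^ q * b ω ^ (1 - q) ∂μ) ∂ν) * (∫⁻ ω, b ω ∂ν) ^ (q - 1) := by
        rw [lintegral_lintegral_swap hm2.aemeasurable]
    _ ≤ (∫⁻ ω, b ω ∂ν) * (∫⁻ ω, b ω ∂ν) ^ (q - 1) := by
        gcongr ?_ * _
        apply lintegral_mono_ae
        filter_upwards [hbt] with ω hω
        have hmo : Measurable fun y => h y ω := hm.comp measurable_prodMk_right
        rw [lintegral_mul_const _ (hmo.pow_const q)]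
        refine (mul_le_mul_left (hab ω) _).trans ?_
        rw [← ENNReal.rpow_add _ _ (hb0 ω) hω]
        simp
    _ = _ := by
        conv_lhs => enter [1]; rw [← ENNReal.rpow_one (∫⁻ ω, b ω ∂ν)]
        rw [← ENNReal.rpow_add_of_nonneg _ _ zero_le_one (by linarith)]
        congr 1; ring

lemma mink {α Ω : Type*} [MeasurableSpace α] [MeasurableSpace Ω] (μ : Measure α) [SFinite μ]
    (ν : Measure Ω) [IsFiniteMeasure ν] (h : α → Ω → ℝ≥0∞) (hm : Measurable (Function.uncurry h))
    (q : ℝ) (hq : 1 < q) :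
    (∫⁻ y, (∫⁻ ω, h y ω ∂ν) ^ q ∂μ) ^ (1 / q) ≤ ∫⁻ ω, (∫⁻ y, h y ω ^ q ∂μ) ^ (1 / q) ∂ν := by
  have hq0 : 0 < q := by linarith
  have hma : Measurable fun ω => (∫⁻ y, h y ω ^ q ∂μ) ^ (1 / q) := by
    apply Measurable.pow_const
    exact (hm.pow_const q).lintegral_prod_left
  apply ENNReal.le_of_forall_pos_le_add
  intro ε hε hfin
  set M := ν univ
  have hM : M ≠ ∞ := measure_ne_top _ _
  set ε' : ℝ≥0∞ := ε / (M + 1)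
  have hε' : ε' ≠ 0 := by
    simp only [ε', ne_eq, ENNReal.div_eq_zero_iff, not_or]
    exact ⟨by exact_mod_cast hε.ne', by simp [hM]⟩
  have hε't : ε' ≠ ∞ := ENNReal.div_ne_top (by simp) (by simp)
  have hle : ε' * M ≤ ε := by
    calc ε' * M ≤ ε' * (M + 1) := by gcongr; exact le_self_add
      _ = ε := ENNReal.div_mul_cancel (by simp) (by simp [hM])
  have key := mink_aux μ ν h hm q hq (fun ω => (∫⁻ y, h y ω ^ q ∂μ) ^ (1 / q) + ε')
    (hma.add_const _) (fun ω => by simp [hε'])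
    (by
      filter_upwards [ae_lt_top hma hfin.ne] with ω hω
      exact ENNReal.add_ne_top.2 ⟨hω.ne, hε't⟩)
    (fun ω => by
      calc (∫⁻ y, h y ω ^ q ∂μ) = ((∫⁻ y, h y ω ^ q ∂μ) ^ (1 / q)) ^ q := by
            rw [← ENNReal.rpow_mul]; simp [hq0.ne']
        _ ≤ _ := by gcongr; exact le_self_add)
  have key2 := ENNReal.rpow_le_rpow key (z := 1 / q) (by positivity)
  rw [← ENNReal.rpow_mul, mul_one_div_cancel hq0.ne', ENNReal.rpow_one,
    lintegral_add_left hma, lintegral_const] at key2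
  exact key2.trans (by gcongr)

/-- ENNReal mixed norm. -/
def mnE {d : ℕ} (q p : ℝ) (h : Pt d → ℝ≥0∞) : ℝ≥0∞ :=
  (∫⁻ x : Spc d, (∫⁻ t : ℝ, h (t, x) ^ q) ^ (p / q)) ^ (1 / p)

lemma mnE_conv {d : ℕ} {Ω : Type*} [MeasurableSpace Ω] (ν : Measure Ω) [IsFiniteMeasure ν]
    (q p : ℝ) (hq : 1 < q) (hp : 1 < p) (h F : Pt d → ℝ≥0∞) (hh : Measurable h)
    (τ : Ω → ℝ) (σ : Ω → Spc d) (hτ : Measurable τ) (hσ : Measurable σ)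
    (hF : ∀ t x, F (t, x) ≤ ∫⁻ ω, h (t + τ ω, x + σ ω) ∂ν) :
    mnE q p F ≤ ν univ * mnE q p h := by
  have hq0 : 0 < q := by linarith
  have hp0 : 0 < p := by linarith
  set φ : Spc d → ℝ≥0∞ := fun x => (∫⁻ t : ℝ, h (t, x) ^ q) ^ (1 / q) with hφ
  have hφm : Measurable φ := by
    apply Measurable.pow_const
    exact (hh.pow_const q).lintegral_prod_left'
  have hE : ∀ x : Spc d, (∫⁻ t : ℝ, h (t, x) ^ q) ^ (p / q) = φ x ^ p := by
    intro x
    rw [hφ]; simp only; rw [← ENNReal.rpow_mul]; congr 1; ring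
  have inner : ∀ x, (∫⁻ t : ℝ, F (t, x) ^ q) ^ (1 / q) ≤ ∫⁻ ω, φ (x + σ ω) ∂ν := by
    intro x
    calc (∫⁻ t : ℝ, F (t, x) ^ q) ^ (1 / q)
        ≤ (∫⁻ t : ℝ, (∫⁻ ω, h (t + τ ω, x + σ ω) ∂ν) ^ q) ^ (1 / q) := by
          gcongr with t; exact hF t x
      _ ≤ ∫⁻ ω, (∫⁻ t : ℝ, h (t + τ ω, x + σ ω) ^ q) ^ (1 / q) ∂ν :=
          mink volume ν (fun t ω => h (t + τ ω, x + σ ω)) (by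
            apply hh.comp
            fun_prop) q hq
      _ = _ := by
          apply lintegral_congr
          intro ω
          rw [hφ]; simp only
          rw [lintegral_add_right_eq_self (fun t => h (t, x + σ ω) ^ q) (τ ω)]
  unfold mnE
  simp_rw [hE]
  calc (∫⁻ x : Spc d, (∫⁻ t : ℝ, F (t, x) ^ q) ^ (p / q)) ^ (1 / p)
      ≤ (∫⁻ x : Spc d, (∫⁻ ω, φ (x + σ ω) ∂ν) ^ p) ^ (1 / p) := by
        gcongr with x
        have e : p / q = (1 / q) * p := by ring
        rw [e, ENNReal.rpow_mul]
        gcongr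
        exact inner x
    _ ≤ ∫⁻ ω, (∫⁻ x : Spc d, φ (x + σ ω) ^ p) ^ (1 / p) ∂ν :=
        mink volume ν (fun x ω => φ (x + σ ω)) (by
            apply hφm.comp
            fun_prop) p hp
    _ = _ := by
        have e : ∀ ω, (∫⁻ x : Spc d, φ (x + σ ω) ^ p) = ∫⁻ x : Spc d, φ x ^ p :=
          fun ω => lintegral_add_right_eq_self (fun x => φ x ^ p) (σ ω)
        simp_rw [e]
        rw [lintegral_const, mul_comm]

lemma mnE_lt_top {d : ℕ} (q p : ℝ) (hq : 1 < q) (hp : 1 < p) (f : Pt d → ℝ)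
    (hf : Continuous f) (hc : HasCompactSupport f) :
    mnE q p (fun z => ‖f z‖ₑ) ≠ ∞ ∧ ∀ x, (∫⁻ t : ℝ, ‖f (t, x)‖ₑ ^ q) ≠ ∞ := by
  have hq0 : 0 < q := by linarith
  have hp0 : 0 < p := by linarith
  obtain ⟨C, hC⟩ := hc.exists_bound_of_continuous hf
  set K1 := Prod.fst '' tsupport f
  set K2 := Prod.snd '' tsupport f
  have hK1 : IsCompact K1 := hc.isCompact.image continuous_fst
  have hK2 : IsCompact K2 := hc.isCompact.image continuous_snd
  have hb : ∀ z, ‖f z‖ₑ ≤ ENNReal.ofReal C := by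
    intro z
    rw [← ofReal_norm]
    exact ENNReal.ofReal_le_ofReal (hC z)
  have h1 : ∀ t x, ‖f (t, x)‖ₑ ^ q ≤ K1.indicator (fun _ => ENNReal.ofReal C ^ q) t := by
    intro t x
    by_cases ht : t ∈ K1
    · rw [indicator_of_mem ht]; gcongr; exact hb _
    · have : f (t, x) = 0 := by
        by_contra h0
        exact ht ⟨(t, x), subset_tsupport f h0, rfl⟩
      simp [this, hq0]
  have h1' : ∀ x, (∫⁻ t : ℝ, ‖f (t, x)‖ₑ ^ q) ≤ ENNReal.ofReal C ^ q * volume K1 := by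
    intro x
    refine (lintegral_mono fun t => h1 t x).trans ?_
    rw [lintegral_indicator hK1.measurableSet, setLIntegral_const]
  have hA : ENNReal.ofReal C ^ q * volume K1 ≠ ∞ :=
    ENNReal.mul_ne_top (ENNReal.rpow_ne_top_of_nonneg hq0.le ENNReal.ofReal_ne_top)
      hK1.measure_ne_top
  have h2 : ∀ x, (∫⁻ t : ℝ, ‖f (t, x)‖ₑ ^ q) ^ (p / q) ≤
      K2.indicator (fun _ => (ENNReal.ofReal C ^ q * volume K1) ^ (p / q)) x := by
    intro x
    by_cases hx : x ∈ K2
    · rw [indicator_of_mem hx]; gcongr; exact h1' x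
    · have : ∀ t, f (t, x) = 0 := by
        intro t
        by_contra h0
        exact hx ⟨(t, x), subset_tsupport f h0, rfl⟩
      simp [this, hq0, hp0]
  refine ⟨?_, fun x => ne_top_of_le_ne_top hA (h1' x)⟩
  unfold mnE
  apply ENNReal.rpow_ne_top_of_nonneg (by positivity)
  refine ne_top_of_le_ne_top ?_ (lintegral_mono h2)
  rw [lintegral_indicator hK2.measurableSet, setLIntegral_const]
  exact ENNReal.mul_ne_top (ENNReal.rpow_ne_top_of_nonneg (by positivity) hA)
      hK2.measure_ne_top

lemma mixedNorm_eq {d : ℕ} (q p : ℝ) (hq : 1 < q) (hp : 1 < p) (f : Pt d → ℝ)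
    (hf : Continuous f) (hc : HasCompactSupport f) :
    mixedNorm q p f = (mnE q p (fun z => ‖f z‖ₑ)).toReal := by
  have hq0 : 0 < q := by linarith
  have hp0 : 0 < p := by linarith
  have hfin := (mnE_lt_top q p hq hp f hf hc).2
  have e : ∀ x, (∫ t : ℝ, |f (t, x)| ^ q) = (∫⁻ t : ℝ, ‖f (t, x)‖ₑ ^ q).toReal := by
    intro x
    rw [integral_eq_lintegral_of_nonneg_ae]
    · congr 1
      apply lintegral_congr
      intro t
      rw [← ENNReal.ofReal_rpow_of_nonneg (abs_nonneg _) hq0.le, ← Real.norm_eq_abs,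
        ofReal_norm]
    · exact Filter.Eventually.of_forall fun t => by positivity
    · apply Continuous.aestronglyMeasurable
      exact (by fun_prop : Continuous fun t => |f (t, x)|).rpow_const fun t => Or.inr hq0.le
  have hm : Measurable fun x : Spc d => (∫⁻ t : ℝ, ‖f (t, x)‖ₑ ^ q) := by
    exact (hf.measurable.enorm.pow_const q).lintegral_prod_left'
  unfold mixedNorm mnE
  simp_rw [e]
  rw [← ENNReal.toReal_rpow, integral_eq_lintegral_of_nonneg_ae]
  · congr 2
    apply lintegral_congr
    intro x
    rw [← ENNReal.ofReal_rpow_of_nonneg ENNReal.toReal_nonneg (by positivity),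
      ENNReal.ofReal_toReal (hfin x)]
  · exact Filter.Eventually.of_forall fun t => by positivity
  · exact (hm.ennreal_toReal.pow_const _).aestronglyMeasurable

lemma Dx_eq {d : ℕ} {u : Pt d → ℝ} (hu : CinfC u) (i : Fin d) :
    Dx i u = fun z => fderiv ℝ u z (0, EuclideanSpace.single i 1) := by
  funext z
  unfold Dx
  have h1 : HasFDerivAt u (fderiv ℝ u z) (z.1, z.2) :=
    (hu.1.differentiable (by simp) z).hasFDerivAt
  have h2 : HasFDerivAt (fun y : Spc d => (z.1, y)) (ContinuousLinearMap.inr ℝ ℝ (Spc d)) z.2 :=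
    hasFDerivAt_prodMk_right z.1 z.2
  have h3 := h1.comp z.2 h2
  have h4 : fderiv ℝ (fun y => u (z.1, y)) z.2 = _ := h3.fderiv
  rw [h4]; simp

lemma Dt_eq {d : ℕ} {u : Pt d → ℝ} (hu : CinfC u) :
    Dt u = fun z => fderiv ℝ u z (1, 0) := by
  funext z
  unfold Dt
  have h1 : HasFDerivAt u (fderiv ℝ u z) (z.1, z.2) :=
    (hu.1.differentiable (by simp) z).hasFDerivAt
  have h2 : HasDerivAt (fun s : ℝ => (s, z.2)) ((1 : ℝ), (0 : Spc d)) z.1 :=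
    (hasDerivAt_id z.1).prodMk (hasDerivAt_const z.1 z.2)
  exact (h1.comp_hasDerivAt z.1 h2).deriv

lemma CinfC.fd {d : ℕ} {u : Pt d → ℝ} (hu : CinfC u) (v : Pt d) :
    CinfC (fun z => fderiv ℝ u z v) :=
  ⟨(hu.1.fderiv_right (m := (⊤ : ℕ∞)) (by simp)).clm_apply contDiff_const, hu.2.fderiv_apply (𝕜 := ℝ) v⟩

lemma CinfC.dx {d : ℕ} {u : Pt d → ℝ} (hu : CinfC u) (i : Fin d) : CinfC (Dx i u) := by
  rw [Dx_eq hu]; exact hu.fd _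

lemma CinfC.dt {d : ℕ} {u : Pt d → ℝ} (hu : CinfC u) : CinfC (Dt u) := by
  rw [Dt_eq hu]; exact hu.fd _

lemma CinfC.add {d : ℕ} {u v : Pt d → ℝ} (hu : CinfC u) (hv : CinfC v) :
    CinfC (fun z => u z + v z) := ⟨hu.1.add hv.1, hu.2.add hv.2⟩

lemma CinfC.cmul {d : ℕ} {u : Pt d → ℝ} (hu : CinfC u) (c : ℝ) :
    CinfC (fun z => c * u z) := ⟨contDiff_const.mul hu.1, hu.2.mul_left⟩

lemma CinfC.sum {d : ℕ} {ι : Type*} (s : Finset ι) {u : ι → Pt d → ℝ} (hu : ∀ i, CinfC (u i)) :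
    CinfC (fun z => ∑ i ∈ s, u i z) := by
  classical
  induction s using Finset.induction_on with
  | empty => exact ⟨by simpa using contDiff_const, by simpa using! (HasCompactSupport.zero : HasCompactSupport (0 : Pt d → ℝ))⟩
  | insert a s ha ih =>
    simp_rw [Finset.sum_insert ha]
    exact (hu a).add ih

/-- the operator -/
def LL {d : ℕ} (lam : ℝ) (u : Pt d → ℝ) : Pt d → ℝ :=
  fun z => Dt u z + (∑ i, Dxx i i u z) - lam * u z

lemma CinfC.LL {d : ℕ} {u : Pt d → ℝ} (hu : CinfC u) (lam : ℝ) : CinfC (LL lam u) := by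
  have := (hu.dt.add (CinfC.sum Finset.univ fun i => (hu.dx i).dx i)).add (hu.cmul (-lam))
  convert this using 1
  funext z
  simp only [_root_.LL, Dxx]; ring

lemma fd_comm {d : ℕ} {u : Pt d → ℝ} (hu : CinfC u) (v w : Pt d) (z : Pt d) :
    fderiv ℝ (fun z => fderiv ℝ u z v) z w = fderiv ℝ (fun z => fderiv ℝ u z w) z v := by
  have hs : IsSymmSndFDerivAt ℝ u z :=
    hu.1.contDiffAt.isSymmSndFDerivAt (n := ((⊤ : ℕ∞) : WithTop ℕ∞))
      (by simp only [minSmoothness_of_isRCLikeNormedField]; exact WithTop.coe_le_coe.2 (le_top : (2 : ℕ∞) ≤ ⊤))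
  have hd : DifferentiableAt ℝ (fderiv ℝ u) z :=
    (hu.1.fderiv_right (m := (⊤ : ℕ∞)) (by simp)).differentiable (by simp) z
  rw [fderiv_clm_apply hd (differentiableAt_const _), fderiv_clm_apply hd (differentiableAt_const _)]
  simpa using hs w v

lemma Dx_comm {d : ℕ} {u : Pt d → ℝ} (hu : CinfC u) (i j : Fin d) :
    Dx i (Dx j u) = Dx j (Dx i u) := by
  rw [Dx_eq (hu.dx j), Dx_eq (hu.dx i), Dx_eq hu, Dx_eq hu]
  funext z; exact fd_comm hu _ _ z

lemma DtDx_comm {d : ℕ} {u : Pt d → ℝ} (hu : CinfC u) (i : Fin d) :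
    Dt (Dx i u) = Dx i (Dt u) := by
  rw [Dx_eq hu.dt, Dt_eq (hu.dx i), Dx_eq hu, Dt_eq hu]
  funext z; exact fd_comm hu _ _ z

lemma Dx_LL {d : ℕ} {u : Pt d → ℝ} (hu : CinfC u) (lam : ℝ) (i : Fin d) :
    Dx i (LL lam u) = LL lam (Dx i u) := by
  have hdf : ∀ {v : Pt d → ℝ}, CinfC v → ∀ z, DifferentiableAt ℝ v z :=
    fun hv z => hv.1.differentiable (by simp) z
  funext z
  have e1 : LL lam (Dx i u) z = Dx i (Dt u) z + (∑ j, Dx i (Dxx j j u) z) - lam * Dx i u z := by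
    unfold LL
    rw [DtDx_comm hu]
    congr 2
    apply Finset.sum_congr rfl
    intro j _
    unfold Dxx
    rw [Dx_comm hu j i, Dx_comm (hu.dx j) j i]
  rw [e1, Dx_eq (hu.LL lam), Dx_eq hu.dt, Dx_eq hu]
  simp_rw [fun j => Dx_eq (i := i) (show CinfC (Dxx j j u) from (hu.dx j).dx j)]
  have hS : DifferentiableAt ℝ (fun z => ∑ j, Dxx j j u z) z :=
    hdf (CinfC.sum Finset.univ fun i => (hu.dx i).dx i) z
  have : fderiv ℝ (LL lam u) z = fderiv ℝ (Dt u) z + (∑ j, fderiv ℝ (Dxx j j u) z)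
      - lam • fderiv ℝ u z := by
    unfold LL
    rw [fderiv_fun_sub ((hdf hu.dt z).fun_add hS) ((hdf hu z).const_mul _),
      fderiv_fun_add (hdf hu.dt z) hS, fderiv_const_mul (hdf hu z),
      fderiv_fun_sum (A := fun j => Dxx j j u) fun j _ => hdf ((hu.dx j).dx j) z]
  simp [this]

/-- unnormalized gaussian -/
def gs {d : ℕ} (z : Spc d) : ℝ := Real.exp (-(‖z‖ ^ 2) / 2)

lemma gs_pos {d : ℕ} (z : Spc d) : 0 < gs z := Real.exp_pos _

lemma gs_cont {d : ℕ} : Continuous (gs : Spc d → ℝ) := by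
  unfold gs; fun_prop

lemma int_exp {d : ℕ} (b : ℝ) (hb : 0 < b) :
    Integrable (fun z : Spc d => Real.exp (-b * ‖z‖ ^ 2)) := by
  have := (GaussianFourier.integrable_cexp_neg_mul_sq_norm_add (V := Spc d) (b := (b : ℂ))
    (by simpa using hb) 0 0).norm
  refine this.congr (Filter.Eventually.of_forall fun z => ?_)
  simp only [Complex.norm_exp]
  congr 1
  simp [← Complex.ofReal_pow]

lemma gs_int {d : ℕ} : Integrable (gs : Spc d → ℝ) := by
  refine (int_exp (1 / 2) (by norm_num)).congr (Filter.Eventually.of_forall fun z => ?_)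
  simp only [gs]; congr 1; ring

lemma gs_int1 {d : ℕ} : Integrable (fun z : Spc d => gs z * ‖z‖) := by
  refine (int_exp (d := d) (1 / 4) (by norm_num)).mono'
    (gs_cont.mul continuous_norm).aestronglyMeasurable
    (Filter.Eventually.of_forall fun z => ?_)
  rw [Real.norm_of_nonneg (mul_nonneg (gs_pos z).le (norm_nonneg _))]
  have h1 : ‖z‖ ≤ Real.exp (‖z‖ ^ 2 / 4) := by
    have := Real.add_one_le_exp (‖z‖ ^ 2 / 4)
    nlinarith [sq_nonneg (‖z‖ / 2 - 1)]
  calc gs z * ‖z‖ ≤ gs z * Real.exp (‖z‖ ^ 2 / 4) := by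
        gcongr; exact (gs_pos z).le
    _ = _ := by
        unfold gs; rw [← Real.exp_add]; congr 1; ring

lemma coord_le {d : ℕ} (z : Spc d) (i : Fin d) : |z i| ≤ ‖z‖ := by
  simpa using PiLp.norm_apply_le z i

lemma gs_int_coord {d : ℕ} (i : Fin d) : Integrable (fun z : Spc d => gs z * z i) := by
  refine gs_int1.mono' (by apply Continuous.aestronglyMeasurable; exact gs_cont.mul (by fun_prop))
    (Filter.Eventually.of_forall fun z => ?_)
  rw [norm_mul, Real.norm_of_nonneg (gs_pos z).le]
  gcongr
  · exact (gs_pos z).le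
  · exact coord_le z i

lemma int_bdd {d : ℕ} {k H : Spc d → ℝ} (hk : Integrable k) (hH : Continuous H) (C : ℝ)
    (hC : ∀ z, ‖H z‖ ≤ C) : Integrable (fun z => k z * H z) :=
  hk.mul_bdd hH.aestronglyMeasurable (Filter.Eventually.of_forall hC)

lemma gs_fderiv {d : ℕ} (z : Spc d) (i : Fin d) :
    DifferentiableAt ℝ (gs : Spc d → ℝ) z ∧
      fderiv ℝ (gs : Spc d → ℝ) z (EuclideanSpace.single i 1) = - (gs z * z i) := by
  have h1 : HasFDerivAt (fun z : Spc d => ‖z‖ ^ 2) _ z := (hasStrictFDerivAt_norm_sq z).hasFDerivAt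
  have h2 : HasFDerivAt (gs : Spc d → ℝ) _ z := ((h1.neg.mul_const (1 / 2 : ℝ)).exp).congr_of_eventuallyEq
    (Filter.Eventually.of_forall fun z => by simp only [gs]; congr 1; simp; ring)
  refine ⟨h2.differentiableAt, ?_⟩
  rw [h2.fderiv]
  have e : Real.exp (-(‖z‖ ^ 2) / 2) = Real.exp (-(‖z‖ ^ 2) * (1 / 2)) := by congr 1; ring
  simp [gs, EuclideanSpace.inner_single_right, e]

lemma gauss_ibp {d : ℕ} (φ : Spc d → ℝ) (hφ : ContDiff ℝ 1 φ) (i : Fin d) (C C' : ℝ)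
    (hC : ∀ z, ‖φ z‖ ≤ C) (hC' : ∀ z, ‖fderiv ℝ φ z (EuclideanSpace.single i 1)‖ ≤ C') :
    ∫ z, gs z * fderiv ℝ φ z (EuclideanSpace.single i 1) = ∫ z, gs z * z i * φ z := by
  have e := integral_mul_fderiv_eq_neg_fderiv_mul_of_integrable (μ := (volume : Measure (Spc d)))
    (f := gs) (g := φ) (v := EuclideanSpace.single i 1)
    (by
      simp_rw [fun z => (gs_fderiv z i).2]
      exact int_bdd (gs_int_coord i).neg hφ.continuous C hC)
    (int_bdd gs_int ((hφ.continuous_fderiv (by simp)).clm_apply continuous_const) C' hC')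
    (int_bdd gs_int hφ.continuous C hC)
    (fun z _ => (gs_fderiv z i).1) (fun z _ => hφ.differentiable (by simp) z)
  rw [e, ← integral_neg]
  congr 1; funext z
  rw [(gs_fderiv z i).2]; ring

lemma CinfC.bdd {d : ℕ} {u : Pt d → ℝ} (hu : CinfC u) : ∃ C, 0 ≤ C ∧ ∀ z, ‖u z‖ ≤ C := by
  obtain ⟨C, hC⟩ := hu.2.exists_bound_of_continuous hu.1.continuous
  exact ⟨C, (norm_nonneg _).trans (hC 0), hC⟩

lemma gauss_ibp' {d : ℕ} {G : Pt d → ℝ} (hG : CinfC G) (i : Fin d) (t : ℝ) (x : Spc d) (r : ℝ) :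
    ∫ z, gs z * (r * Dx i G (t, x + r • z)) = ∫ z, gs z * z i * G (t, x + r • z) := by
  obtain ⟨C, hC0, hC⟩ := hG.bdd
  obtain ⟨C', hC0', hC'⟩ := (hG.dx i).bdd
  have hφ : ContDiff ℝ 1 (fun z : Spc d => G (t, x + r • z)) := by
    apply (hG.1.of_le (by exact_mod_cast le_top)).comp
    fun_prop
  have hd : ∀ z : Spc d, fderiv ℝ (fun z : Spc d => G (t, x + r • z)) z
      (EuclideanSpace.single i 1) = r * Dx i G (t, x + r • z) := by
    intro z
    rw [Dx_eq hG]
    have h1 : HasFDerivAt G (fderiv ℝ G (t, x + r • z)) (t, x + r • z) :=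
      (hG.1.differentiable (by simp) _).hasFDerivAt
    have h2 : HasFDerivAt (fun z : Spc d => (t, x + r • z)) 
        ((0 : Spc d →L[ℝ] ℝ).prod (r • ContinuousLinearMap.id ℝ (Spc d))) z :=
      (hasFDerivAt_const t z).prodMk (((hasFDerivAt_id z).const_smul r).const_add x)
    have h4 : fderiv ℝ (fun z : Spc d => G (t, x + r • z)) z = _ := (h1.comp z h2).fderiv
    rw [h4]
    have : ((0 : ℝ), r • (EuclideanSpace.single i 1 : Spc d)) = r • ((0 : ℝ), (EuclideanSpace.single i 1 : Spc d)) := by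
      simp
    simp only [ContinuousLinearMap.comp_apply, ContinuousLinearMap.prod_apply,
      zero_apply, smul_apply, ContinuousLinearMap.id_apply]
    rw [this, map_smul, smul_eq_mul]
  have := gauss_ibp _ hφ i C (|r| * C') (fun z => hC _) (fun z => by
    rw [hd, norm_mul, Real.norm_eq_abs]
    gcongr
    exact hC' _)
  simp_rw [hd] at this
  exact this

lemma path_deriv {d : ℕ} {U : Pt d → ℝ} (hU : CinfC U) (t : ℝ) (x z : Spc d) (r : ℝ) :
    HasDerivAt (fun r : ℝ => U (t + r ^ 2 / 2, x + r • z))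
      (r * Dt U (t + r ^ 2 / 2, x + r • z) + ∑ j, z j * Dx j U (t + r ^ 2 / 2, x + r • z)) r := by
  have h1 : HasFDerivAt U (fderiv ℝ U (t + r ^ 2 / 2, x + r • z)) (t + r ^ 2 / 2, x + r • z) :=
    (hU.1.differentiable (by simp) _).hasFDerivAt
  have h2 : HasDerivAt (fun r : ℝ => t + r ^ 2 / 2) r r := by
    have := ((hasDerivAt_pow 2 r).div_const 2).const_add t
    refine this.congr_deriv ?_
    simp
  have h3 : HasDerivAt (fun r : ℝ => x + r • z) z r := by
    simpa using ((hasDerivAt_id r).smul_const z).const_add x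
  have h4 := h1.comp_hasDerivAt r (h2.prodMk h3)
  refine h4.congr_deriv ?_
  have e : ((r, z) : Pt d) = r • ((1 : ℝ), (0 : Spc d)) +
      ∑ j, z j • ((0 : ℝ), (EuclideanSpace.single j 1 : Spc d)) := by
    ext1
    · simp [Prod.fst_sum]
    · simp only [Prod.snd_add, Prod.snd_sum, Prod.smul_snd, smul_zero, zero_add]
      ext k
      simp [Finset.sum_apply, Pi.single_apply]
  rw [e, map_add, map_sum]
  simp only [map_smul, smul_eq_mul, Dx_eq hU, Dt_eq hU]

lemma W_deriv {d : ℕ} {U : Pt d → ℝ} (hU : CinfC U) (lam : ℝ) (hl : 0 < lam)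
    (t : ℝ) (x : Spc d) (r : ℝ) :
    HasDerivAt (fun r : ℝ => ∫ z, gs z * (Real.exp (-(lam / 2) * r ^ 2) * U (t + r ^ 2 / 2, x + r • z)))
      (∫ z, gs z * (Real.exp (-(lam / 2) * r ^ 2) *
        (r * (Dt U (t + r ^ 2 / 2, x + r • z) - lam * U (t + r ^ 2 / 2, x + r • z)) +
          ∑ j, z j * Dx j U (t + r ^ 2 / 2, x + r • z)))) r := by
  obtain ⟨C, hC0, hC⟩ := hU.bdd
  obtain ⟨Ct, hCt0, hCt⟩ := hU.dt.bdd
  choose Cx hCx0 hCx using fun j => (hU.dx j).bdd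
  have cU := hU.1.continuous
  have cUt := hU.dt.1.continuous
  have cUx := fun j => (hU.dx j).1.continuous
  have hexp : ∀ r : ℝ, Real.exp (-(lam / 2) * r ^ 2) ≤ 1 := fun r => by
    rw [Real.exp_le_one_iff]
    have : 0 ≤ lam / 2 * r ^ 2 := by positivity
    linarith
  refine (hasDerivAt_integral_of_dominated_loc_of_deriv_le (s := ball r 1)
    (F := fun (r : ℝ) (z : Spc d) => gs z * (Real.exp (-(lam / 2) * r ^ 2) * U (t + r ^ 2 / 2, x + r • z)))
    (F' := fun (r : ℝ) (z : Spc d) => gs z * (Real.exp (-(lam / 2) * r ^ 2) *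
        (r * (Dt U (t + r ^ 2 / 2, x + r • z) - lam * U (t + r ^ 2 / 2, x + r • z)) +
          ∑ j, z j * Dx j U (t + r ^ 2 / 2, x + r • z))))
    (bound := fun z => gs z * ((|r| + 1) * (Ct + lam * C)) + gs z * ‖z‖ * ∑ j, Cx j)
    (ball_mem_nhds r one_pos) ?_ ?_ ?_ ?_ ?_ ?_).2
  · refine Filter.Eventually.of_forall fun r => Continuous.aestronglyMeasurable ?_
    exact gs_cont.mul (by fun_prop)
  · refine int_bdd gs_int (by fun_prop) C fun z => ?_
    rw [norm_mul, Real.norm_of_nonneg (Real.exp_pos _).le]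
    calc _ ≤ 1 * C := by gcongr; exacts [hexp r, hC _]
      _ = C := one_mul C
  · exact Continuous.aestronglyMeasurable (gs_cont.mul (by fun_prop))
  · refine Filter.Eventually.of_forall fun z s hs => ?_
    have hs' : |s| ≤ |r| + 1 := by
      have : |s - r| < 1 := by simpa [Real.dist_eq] using hs
      have := abs_sub_abs_le_abs_sub s r
      linarith
    rw [norm_mul, norm_mul, Real.norm_of_nonneg (Real.exp_pos _).le,
      Real.norm_of_nonneg (gs_pos z).le, mul_assoc, ← mul_add]
    refine mul_le_mul_of_nonneg_left ?_ (gs_pos z).le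
    refine (mul_le_of_le_one_left (norm_nonneg _) (hexp s)).trans ?_
    refine (norm_add_le _ _).trans (add_le_add ?_ ?_)
    · rw [norm_mul, Real.norm_eq_abs]
      gcongr
      refine (norm_sub_le _ _).trans (add_le_add (hCt _) ?_)
      rw [norm_mul, Real.norm_of_nonneg hl.le]
      gcongr
      exact hC _
    · rw [Finset.mul_sum]
      refine (norm_sum_le _ _).trans (Finset.sum_le_sum fun j _ => ?_)
      rw [norm_mul]
      gcongr
      · exact coord_le z j
      · exact hCx j _
  · exact (gs_int.mul_const _).add (gs_int1.mul_const _)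
  · refine Filter.Eventually.of_forall fun z s _ => ?_
    have h1 := path_deriv hU t x z s
    have h2 : HasDerivAt (fun s : ℝ => Real.exp (-(lam / 2) * s ^ 2))
        (Real.exp (-(lam / 2) * s ^ 2) * (-(lam * s))) s := by
      have := ((hasDerivAt_pow 2 s).const_mul (-(lam / 2))).exp
      refine this.congr_deriv ?_
      simp; ring_nf
    refine ((h2.mul h1).const_mul (gs z)).congr_deriv ?_
    ring

lemma W_deriv' {d : ℕ} {u : Pt d → ℝ} (hu : CinfC u) (lam : ℝ) (hl : 0 < lam) (i : Fin d)
    (t : ℝ) (x : Spc d) (r : ℝ) :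
    HasDerivAt (fun r : ℝ => ∫ z, gs z * (Real.exp (-(lam / 2) * r ^ 2) *
        Dx i u (t + r ^ 2 / 2, x + r • z)))
      (Real.exp (-(lam / 2) * r ^ 2) *
        ∫ z, gs z * z i * LL lam u (t + r ^ 2 / 2, x + r • z)) r := by
  have hU := hu.dx i
  refine (W_deriv hU lam hl t x r).congr_deriv (Eq.symm ?_)
  set U := Dx i u with hUdef
  set T := t + r ^ 2 / 2
  have cU := hU.1.continuous
  have cUt := hU.dt.1.continuous
  obtain ⟨C1, _, hC1⟩ := (hU.dt.add (hU.cmul (-lam))).bdd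
  choose Cx hCx0 hCx using fun j => (hU.dx j).bdd
  choose Cxx hCxx0 hCxx using fun j => ((hU.dx j).dx j).bdd
  have cUx := fun j => (hU.dx j).1.continuous
  have cUxx := fun j => ((hU.dx j).dx j).1.continuous
  have iA : Integrable (fun z : Spc d => gs z * (r * (Dt U (T, x + r • z) - lam * U (T, x + r • z)))) := by
    refine int_bdd gs_int (by fun_prop) (|r| * C1) fun z => ?_
    rw [norm_mul, Real.norm_eq_abs]
    gcongr
    have := hC1 (T, x + r • z)
    rwa [neg_mul, ← sub_eq_add_neg] at this
  have iB : ∀ j, Integrable (fun z : Spc d => gs z * z j * Dx j U (T, x + r • z)) := fun j =>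
    int_bdd (gs_int_coord j) (by fun_prop) (Cx j) fun z => hCx j _
  have iC : ∀ j, Integrable (fun z : Spc d => gs z * (r * Dx j (Dx j U) (T, x + r • z))) := fun j => by
    refine int_bdd gs_int (by fun_prop) (|r| * Cxx j) fun z => ?_
    rw [norm_mul, Real.norm_eq_abs]
    gcongr
    exact hCxx j _
  rw [← gauss_ibp' (hu.LL lam) i T x r, Dx_LL hu, ← integral_const_mul]
  have e1 : (∫ z : Spc d, gs z * (r * (Dt U (T, x + r • z) - lam * U (T, x + r • z))) +
        ∑ j, gs z * (r * Dx j (Dx j U) (T, x + r • z)))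
      = ∫ z : Spc d, gs z * (r * (Dt U (T, x + r • z) - lam * U (T, x + r • z))) +
        ∑ j, gs z * z j * Dx j U (T, x + r • z) := by
    rw [integral_add iA (integrable_finsetSum _ fun j _ => iC j),
      integral_add iA (integrable_finsetSum _ fun j _ => iB j),
      integral_finsetSum _ fun j _ => iC j, integral_finsetSum _ fun j _ => iB j]
    congr 1
    exact Finset.sum_congr rfl fun j _ => gauss_ibp' (hU.dx j) j T x r
  have e2 := congrArg (fun s => Real.exp (-(lam / 2) * r ^ 2) * s) e1
  simp only [← integral_const_mul] at e2
  refine Eq.trans (integral_congr_ae (Filter.Eventually.of_forall fun z => ?_))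
    (e2.trans (integral_congr_ae (Filter.Eventually.of_forall fun z => ?_)))
  · simp only [LL, Dxx, ← Finset.mul_sum]
    ring
  · simp only [mul_assoc, ← Finset.mul_sum]
    ring

lemma gs_integral_pos {d : ℕ} : 0 < ∫ z : Spc d, gs z := by
  rw [integral_pos_iff_support_of_nonneg (fun z => (gs_pos z).le) gs_int]
  have : Function.support (gs : Spc d → ℝ) = univ := by
    ext z; simp [(gs_pos z).ne']
  rw [this]
  exact isOpen_univ.measure_pos volume univ_nonempty

lemma duhamel {d : ℕ} {u : Pt d → ℝ} (hu : CinfC u) (lam : ℝ) (hl : 0 < lam) (i : Fin d)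
    (t : ℝ) (x : Spc d) :
    ‖(∫ z : Spc d, gs z) * Dx i u (t, x)‖ₑ ≤
      ∫⁻ r in Ioi (0 : ℝ), ∫⁻ z : Spc d, ENNReal.ofReal (Real.exp (-(lam / 2) * r ^ 2)) *
        (ENNReal.ofReal (gs z * ‖z‖) * ‖LL lam u (t + r ^ 2 / 2, x + r • z)‖ₑ) := by
  have hU := hu.dx i
  have hf := hu.LL lam
  obtain ⟨C, hC0, hC⟩ := hU.bdd
  obtain ⟨Cf, hCf0, hCf⟩ := hf.bdd
  have cf := hf.1.continuous
  have hl2 : 0 < lam / 2 := by positivity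
  set W := fun r : ℝ => ∫ z, gs z * (Real.exp (-(lam / 2) * r ^ 2) *
        Dx i u (t + r ^ 2 / 2, x + r • z)) with hW
  set V := fun r : ℝ => Real.exp (-(lam / 2) * r ^ 2) *
        ∫ z, gs z * z i * LL lam u (t + r ^ 2 / 2, x + r • z) with hV
  have hd : ∀ r, HasDerivAt W (V r) r := fun r => W_deriv' hu lam hl i t x r
  have hgi : Integrable (fun r : ℝ => Real.exp (-(lam / 2) * r ^ 2)) := integrable_exp_neg_mul_sq hl2
  have hVm : AEStronglyMeasurable V (volume.restrict (Ioi 0)) := by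
    have : V = deriv W := funext fun r => (hd r).deriv.symm
    rw [this]
    exact (stronglyMeasurable_deriv W).aestronglyMeasurable
  have hVint : IntegrableOn V (Ioi 0) := by
    refine (hgi.integrableOn.mul_const (∫ z : Spc d, gs z * ‖z‖ * Cf)).mono' hVm
      (Filter.Eventually.of_forall fun r => ?_)
    rw [hV, norm_mul, Real.norm_of_nonneg (Real.exp_pos _).le]
    gcongr
    refine norm_integral_le_of_norm_le (gs_int1.mul_const Cf)
      (Filter.Eventually.of_forall fun z => ?_)
    rw [norm_mul, norm_mul, Real.norm_of_nonneg (gs_pos z).le]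
    have := gs_pos z
    gcongr
    · exact coord_le z i
    · exact hCf _
  have hlim : Filter.Tendsto W Filter.atTop (nhds 0) := by
    have hb : ∀ r, ‖W r‖ ≤ Real.exp (-(lam / 2) * r ^ 2) * (∫ z : Spc d, gs z * C) := by
      intro r
      rw [← integral_const_mul]
      refine norm_integral_le_of_norm_le ((gs_int.mul_const C).const_mul _)
        (Filter.Eventually.of_forall fun z => ?_)
      rw [norm_mul, norm_mul, Real.norm_of_nonneg (gs_pos z).le,
        Real.norm_of_nonneg (Real.exp_pos _).le, mul_left_comm]
      have := gs_pos z
      gcongr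
      exact hC _
    refine squeeze_zero_norm hb ?_
    rw [← zero_mul (∫ z : Spc d, gs z * C)]
    refine Filter.Tendsto.mul_const _ ?_
    refine Real.tendsto_exp_atBot.comp ?_
    exact (Filter.tendsto_pow_atTop two_ne_zero).const_mul_atTop_of_neg (by linarith)
  have key := integral_Ioi_of_hasDerivAt_of_tendsto' (a := 0) (fun r _ => hd r) hVint hlim
  have hW0 : W 0 = (∫ z : Spc d, gs z) * Dx i u (t, x) := by
    rw [hW, ← integral_mul_const]; simp
  rw [zero_sub, hW0] at key
  rw [← enorm_neg, ← key]
  refine (enorm_integral_le_lintegral_enorm _).trans (lintegral_mono fun r => ?_)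
  rw [lintegral_const_mul' _ _ ENNReal.ofReal_ne_top, hV]
  simp only [enorm_mul]
  refine mul_le_mul' (by rw [Real.enorm_of_nonneg (Real.exp_pos _).le]) ?_
  refine (enorm_integral_le_lintegral_enorm _).trans (lintegral_mono fun z => ?_)
  rw [enorm_mul]
  refine mul_le_mul' ?_ le_rfl
  rw [← ofReal_norm, norm_mul, Real.norm_of_nonneg (gs_pos z).le]
  apply ENNReal.ofReal_le_ofReal
  have := gs_pos z
  gcongr
  exact coord_le z i

lemma vnorm_le {d : ℕ} (v : Fin d → ℝ) : ‖vnorm v‖ₑ ≤ ∑ i, ‖v i‖ₑ := by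
  have h : vnorm v = ‖(WithLp.toLp 2 v : Spc d)‖ := by
    rw [EuclideanSpace.norm_eq]; simp [vnorm]
  have h2 : (WithLp.toLp 2 v : Spc d) = ∑ i, v i • (EuclideanSpace.single i 1 : Spc d) := by
    ext k; simp [Pi.single_apply]
  rw [h, enorm_norm, h2]
  refine (enorm_sum_le _ _).trans (Finset.sum_le_sum fun i _ => ?_)
  rw [enorm_smul]
  simp [← ofReal_norm]

lemma prod_wd {α β : Type*} [MeasurableSpace α] [MeasurableSpace β] (μ1 : Measure α)
    (μ2 : Measure β) [SFinite μ1] [SFinite μ2] (k1 : α → ℝ≥0∞) (k2 : β → ℝ≥0∞)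
    (mk1 : Measurable k1) (mk2 : Measurable k2) (H : α × β → ℝ≥0∞) (mh : Measurable H) :
    ∫⁻ ω, H ω ∂((μ1.withDensity k1).prod (μ2.withDensity k2)) =
      ∫⁻ a, ∫⁻ b, k1 a * (k2 b * H (a, b)) ∂μ2 ∂μ1 := by
  rw [lintegral_prod _ mh.aemeasurable,
    lintegral_withDensity_eq_lintegral_mul _ mk1 mh.lintegral_prod_right']
  apply lintegral_congr
  intro a
  have mha : Measurable fun b => H (a, b) := mh.comp measurable_prodMk_left
  rw [Pi.mul_apply, lintegral_withDensity_eq_lintegral_mul _ mk2 mha,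
    ← lintegral_const_mul _ (mk2.mul mha)]
  rfl

set_option maxHeartbeats 400000 in
lemma stmt8_core (d : ℕ) (p q : ℝ) (hp : 1 < p) (hq : 1 < q)
    (u : Pt d → ℝ) (hu : CinfC u) (lam : ℝ) (hl : 0 < lam) :
    mnE q p (fun z => ‖vnorm fun i => Dx i u z‖ₑ) ≤
      ENNReal.ofReal ((√(2 * Real.pi) / 2 * (d * (∫ z : Spc d, gs z)⁻¹ * ∫ z : Spc d, gs z * ‖z‖))
        * (√lam)⁻¹) * mnE q p (fun z => ‖LL lam u z‖ₑ) := by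
  have hl2 : 0 < lam / 2 := by positivity
  set c := ∫ z : Spc d, gs z with hc
  have hc0 : 0 < c := gs_integral_pos
  have hgi : Integrable (fun r : ℝ => Real.exp (-(lam / 2) * r ^ 2)) := integrable_exp_neg_mul_sq hl2
  have cf := (hu.LL lam).1.continuous
  have cg := gs_cont (d := d)
  set k1 : ℝ → ℝ≥0∞ := fun r => ENNReal.ofReal (Real.exp (-(lam / 2) * r ^ 2)) with hk1
  set k2 : Spc d → ℝ≥0∞ := fun z => ENNReal.ofReal (d * c⁻¹ * (gs z * ‖z‖)) with hk2
  have mk1 : Measurable k1 := by fun_prop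
  have mk2 : Measurable k2 := by fun_prop
  set ν1 := (volume.restrict (Ioi (0 : ℝ))).withDensity k1 with hν1
  set ν2 := (volume : Measure (Spc d)).withDensity k2 with hν2
  have m1 : ν1 univ = ENNReal.ofReal (√(2 * Real.pi) / 2 * (√lam)⁻¹) := by
    rw [hν1, withDensity_apply _ MeasurableSet.univ, Measure.restrict_univ, hk1,
      ← ofReal_integral_eq_lintegral_ofReal hgi.integrableOn
        (Filter.Eventually.of_forall fun r => (Real.exp_pos _).le), integral_gaussian_Ioi]
    congr 1
    have : Real.pi / (lam / 2) = 2 * Real.pi / lam := by field_simp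
    rw [this, Real.sqrt_div (by positivity)]
    ring
  have m2 : ν2 univ = ENNReal.ofReal (d * c⁻¹ * ∫ z : Spc d, gs z * ‖z‖) := by
    have hnn : ∀ z : Spc d, 0 ≤ d * c⁻¹ * (gs z * ‖z‖) := fun z =>
      mul_nonneg (mul_nonneg (Nat.cast_nonneg d) (inv_nonneg.2 hc0.le))
        (mul_nonneg (gs_pos z).le (norm_nonneg z))
    rw [hν2, withDensity_apply _ MeasurableSet.univ, Measure.restrict_univ, hk2,
      ← ofReal_integral_eq_lintegral_ofReal (gs_int1.const_mul _)
        (Filter.Eventually.of_forall hnn), integral_const_mul]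
  have : IsFiniteMeasure ν1 := ⟨by rw [m1]; exact ENNReal.ofReal_lt_top⟩
  have : IsFiniteMeasure ν2 := ⟨by rw [m2]; exact ENNReal.ofReal_lt_top⟩
  have main := mnE_conv (d := d) (ν1.prod ν2) q p hq hp (fun z => ‖LL lam u z‖ₑ)
    (fun z => ‖vnorm fun i => Dx i u z‖ₑ) cf.measurable.enorm
    (fun ω => ω.1 ^ 2 / 2) (fun ω => ω.1 • ω.2) (by fun_prop) (by fun_prop) (by
      intro t x
      have hB : (∫⁻ ω, ‖LL lam u (t + ω.1 ^ 2 / 2, x + ω.1 • ω.2)‖ₑ ∂(ν1.prod ν2)) =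
          ENNReal.ofReal (d * c⁻¹) *
          ∫⁻ r in Ioi (0 : ℝ), ∫⁻ z : Spc d, ENNReal.ofReal (Real.exp (-(lam / 2) * r ^ 2)) *
        (ENNReal.ofReal (gs z * ‖z‖) * ‖LL lam u (t + r ^ 2 / 2, x + r • z)‖ₑ) := by
        have mh : Measurable fun ω : ℝ × Spc d => ‖LL lam u (t + ω.1 ^ 2 / 2, x + ω.1 • ω.2)‖ₑ :=
          (by fun_prop : Continuous fun ω : ℝ × Spc d =>
            LL lam u (t + ω.1 ^ 2 / 2, x + ω.1 • ω.2)).measurable.enorm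
        rw [hν1, hν2, prod_wd _ _ k1 k2 mk1 mk2 _ mh,
          ← lintegral_const_mul' (ENNReal.ofReal (d * c⁻¹)) _ ENNReal.ofReal_ne_top]
        apply lintegral_congr
        intro r
        rw [← lintegral_const_mul' (ENNReal.ofReal (d * c⁻¹)) _ ENNReal.ofReal_ne_top]
        apply lintegral_congr
        intro z
        simp only [hk1, hk2]
        rw [ENNReal.ofReal_mul (p := d * c⁻¹) (by positivity)]
        ring
      rw [hB]
      set B := ∫⁻ r in Ioi (0 : ℝ), ∫⁻ z : Spc d, ENNReal.ofReal (Real.exp (-(lam / 2) * r ^ 2)) *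
        (ENNReal.ofReal (gs z * ‖z‖) * ‖LL lam u (t + r ^ 2 / 2, x + r • z)‖ₑ)
      have h1 : ∀ i, ‖Dx i u (t, x)‖ₑ ≤ ENNReal.ofReal c⁻¹ * B := by
        intro i
        have h2 := duhamel hu lam hl i t x
        have h3 : Dx i u (t, x) = c⁻¹ * (c * Dx i u (t, x)) := by field_simp
        rw [h3, enorm_mul, Real.enorm_of_nonneg (by positivity)]
        gcongr
      refine (vnorm_le _).trans ((Finset.sum_le_sum fun i _ => h1 i).trans ?_)
      rw [Finset.sum_const, Finset.card_univ, Fintype.card_fin, nsmul_eq_mul,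
        ENNReal.ofReal_mul (by positivity), ENNReal.ofReal_natCast, mul_assoc])
  refine main.trans (le_of_eq ?_)
  rw [← univ_prod_univ, Measure.prod_prod, m1, m2, ← ENNReal.ofReal_mul (by positivity)]
  congr 2
  ring

theorem stmt8 (d : ℕ) (hd : 1 ≤ d) :
    ∃ N : ℝ, 0 < N ∧ ∀ p q : ℝ, 1 < p → 1 < q →
      ∀ u : Pt d → ℝ, CinfC u → ∀ lam : ℝ, 0 < lam →
        mixedNorm q p (fun z => vnorm fun i => Dx i u z) ≤
          N * (Real.sqrt lam)⁻¹ *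
            mixedNorm q p (fun z => Dt u z + (∑ i, Dxx i i u z) - lam * u z) := by
  set N0 : ℝ := √(2 * Real.pi) / 2 * (d * (∫ z : Spc d, gs z)⁻¹ * ∫ z : Spc d, gs z * ‖z‖) with hN0
  have hN0' : 0 ≤ N0 := by
    have h1 := gs_integral_pos (d := d)
    have h2 : 0 ≤ ∫ z : Spc d, gs z * ‖z‖ :=
      integral_nonneg fun z => mul_nonneg (gs_pos z).le (norm_nonneg _)
    positivity
  refine ⟨N0 + 1, by positivity, ?_⟩
  intro p q hp hq u hu lam hl
  have hcore := stmt8_core d p q hp hq u hu lam hl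
  have hf := hu.LL lam
  have hfin := (mnE_lt_top q p hq hp _ hf.1.continuous hf.2).1
  have hR : mixedNorm q p (fun z => Dt u z + (∑ i, Dxx i i u z) - lam * u z) =
      (mnE q p (fun z => ‖LL lam u z‖ₑ)).toReal := mixedNorm_eq q p hq hp _ hf.1.continuous hf.2
  have cx := fun i => (hu.dx i).1.continuous
  have hL : mixedNorm q p (fun z => vnorm fun i => Dx i u z) =
      (mnE q p (fun z => ‖vnorm fun i => Dx i u z‖ₑ)).toReal := by
    refine mixedNorm_eq q p hq hp _ (by unfold vnorm; fun_prop) ?_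
    refine HasCompactSupport.intro hu.2.isCompact fun z hz => ?_
    have : ∀ i, Dx i u z = 0 := by
      intro i
      rw [Dx_eq hu]
      have : z ∉ tsupport (fderiv ℝ u) := fun h => hz (tsupport_fderiv_subset ℝ h)
      simp [image_eq_zero_of_notMem_tsupport this]
    simp [vnorm, this]
  rw [hL, hR]
  have h3 := ENNReal.toReal_mono (ENNReal.mul_ne_top ENNReal.ofReal_ne_top hfin) hcore
  rw [ENNReal.toReal_mul, ENNReal.toReal_ofReal (by positivity)] at h3
  refine h3.trans ?_
  gcongr
  linarith
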